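/- arXiv:2005.07373 — 4 statements merged into one kernel-verified Lean document; each statement's English description precedes it below -/
import Mathlib

section
/- Let k ≥ 11 and ℓ ≥ 1, let D be a set of kℓ distinct real numbers, and let B_1, …, B_k be the consecutive blocks of ℓ elements each in the increasing order of D (so every element of B_i is less than every element of B_{i+1}). Let A be a nonempty finite multiset of elements of D and t ≥ 1 a natural number with t ≤ |A|. Suppose that fewer than t elements of A (counted with multiplicity) lie in B_1, and at least t elements of A lie in B_1 ∪ … ∪ B_11. Then the t-th smallest element r of A (counted with multiplicity) satisfies ℓ ≤ |{x ∈ D : x ≤ r}| ≤ 11ℓ. -/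
/-!
If fewer than `t` samples lie in an initial segment `L` of the data while at least `t` samples are
`≤ r`, then some sample `a ≤ r` lies outside `L`, so every point of `L` is below `a`, hence below
`r`. Dually, if at least `t` samples lie in an initial segment `U` while fewer than `t` are `< r`,
then some sample of `U` is `≥ r`, so `U` contains every data point up to `r`. The two bounds come
from counting `L` and `U` when they are unions of initial blocks.
-/

open Finset

theorem exists_mem_and_not_of_card_filter_lt {α : Type*} {s : Multiset α} {p q : α → Prop}
    [DecidablePred p] [DecidablePred q] (h : (s.filter p).card < (s.filter q).card) :
    ∃ a ∈ s, q a ∧ ¬ p a := by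
  by_contra! hqp
  refine h.not_ge (Multiset.card_le_card (Multiset.le_filter.2 ⟨Multiset.filter_le q s, ?_⟩))
  intro a ha
  exact hqp a (Multiset.mem_of_mem_filter ha) (Multiset.of_mem_filter ha)

section InitialSegment

variable {α : Type*} [LinearOrder α] {D : Finset α} {A : Multiset α} {t : ℕ} {r : α}

theorem subset_filter_le_of_card_filter_mem_lt {L : Finset α}
    (hL : IsRelLowerSet (L : Set α) (· ∈ D)) (hAD : ∀ x ∈ A, x ∈ D)
    (hAL : (A.filter (· ∈ L)).card < t) (hr : t ≤ (A.filter (· ≤ r)).card) :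
    L ⊆ {x ∈ D | x ≤ r} := by
  obtain ⟨a, haA, har, haL⟩ := exists_mem_and_not_of_card_filter_lt (hAL.trans_le hr)
  intro x hx
  have hxa : x < a := lt_of_not_ge fun hax => haL (hL.mem_of_le hx hax (hAD a haA))
  exact mem_filter.2 ⟨hL.prop_of_mem hx, hxa.le.trans har⟩

theorem filter_le_subset_of_le_card_filter_mem {U : Finset α}
    (hU : IsRelLowerSet (U : Set α) (· ∈ D))
    (hr : (A.filter (· < r)).card < t) (hAU : t ≤ (A.filter (· ∈ U)).card) :
    {x ∈ D | x ≤ r} ⊆ U := by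
  obtain ⟨a, -, haU, har⟩ := exists_mem_and_not_of_card_filter_lt (hr.trans_le hAU)
  intro x hx
  obtain ⟨hxD, hxr⟩ := mem_filter.1 hx
  exact hU.mem_of_le haU (hxr.trans (not_lt.1 har)) hxD

end InitialSegment

section Blocks

variable {ι α : Type*} [LinearOrder ι] {I J : Finset ι} {B : ι → Finset α}

theorem isRelLowerSet_biUnion [Preorder α] [DecidableEq α]
    (hB : ∀ i ∈ I, ∀ j ∈ I, i < j → ∀ x ∈ B i, ∀ y ∈ B j, x < y)
    (hJ : IsRelLowerSet (J : Set ι) (· ∈ I)) :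
    IsRelLowerSet (J.biUnion B : Set α) (· ∈ I.biUnion B) := by
  intro x hx
  obtain ⟨j, hj, hxj⟩ := mem_biUnion.1 hx
  have hjI : j ∈ I := hJ.prop_of_mem hj
  refine ⟨mem_biUnion.2 ⟨j, hjI, hxj⟩, fun y hyx hy => ?_⟩
  obtain ⟨i, hi, hyi⟩ := mem_biUnion.1 hy
  have hij : i ≤ j := le_of_not_gt fun hji => (hB j hjI i hi hji x hxj y hyi).not_ge hyx
  exact mem_biUnion.2 ⟨i, hJ.mem_of_le hj hij hi, hyi⟩

theorem pairwiseDisjoint_of_forall_lt [Preorder α]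
    (hB : ∀ i ∈ I, ∀ j ∈ I, i < j → ∀ x ∈ B i, ∀ y ∈ B j, x < y) :
    (I : Set ι).PairwiseDisjoint B := by
  intro i hi j hj hij
  refine disjoint_left.2 fun x hxi hxj => ?_
  rcases hij.lt_or_gt with hlt | hgt
  · exact lt_irrefl x (hB i hi j hj hlt x hxi x hxj)
  · exact lt_irrefl x (hB j hj i hi hgt x hxj x hxi)

end Blocks

theorem isRelLowerSet_range {m k : ℕ} (hmk : m ≤ k) :
    IsRelLowerSet (range m : Set ℕ) (· ∈ range k) := by
  intro j hj
  have hjm : j < m := mem_range.1 hj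
  exact ⟨mem_range.2 (hjm.trans_le hmk), fun i hij _ => mem_range.2 (hij.trans_lt hjm)⟩

theorem rank_t_sample_prunes_general {α : Type*} [LinearOrder α] {k a b : ℕ}
    (hak : a ≤ k) (hbk : b ≤ k) {B : ℕ → Finset α}
    (hB : ∀ i < k, ∀ j < k, i < j → ∀ x ∈ B i, ∀ y ∈ B j, x < y)
    {A : Multiset α} (hA : ∀ x ∈ A, x ∈ (range k).biUnion B) {t : ℕ}
    (ha : (A.filter (· ∈ (range a).biUnion B)).card < t)
    (hb : t ≤ (A.filter (· ∈ (range b).biUnion B)).card)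
    {r : α} (hr_le : t ≤ (A.filter (· ≤ r)).card) (hr_lt : (A.filter (· < r)).card < t) :
    ∑ i ∈ range a, #(B i) ≤ #{x ∈ (range k).biUnion B | x ≤ r} ∧
      #{x ∈ (range k).biUnion B | x ≤ r} ≤ ∑ i ∈ range b, #(B i) := by
  have hBk : ∀ i ∈ range k, ∀ j ∈ range k, i < j → ∀ x ∈ B i, ∀ y ∈ B j, x < y := by
    simpa only [mem_range] using hB
  have hinitial {m : ℕ} (hmk : m ≤ k) :
      IsRelLowerSet ((range m).biUnion B : Set α) (· ∈ (range k).biUnion B) :=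
    isRelLowerSet_biUnion hBk (isRelLowerSet_range hmk)
  have hdisjoint : (range a : Set ℕ).PairwiseDisjoint B :=
    (pairwiseDisjoint_of_forall_lt hBk).subset (coe_subset.2 (range_subset_range.2 hak))
  constructor
  · rw [← card_biUnion hdisjoint]
    exact card_le_card (subset_filter_le_of_card_filter_mem_lt (hinitial hak) hA ha hr_le)
  · exact (card_le_card (filter_le_subset_of_le_card_filter_mem (hinitial hbk) hr_lt hb)).trans
      card_biUnion_le

/-- **Deterministic core of Lemma 2.**
Let `D` be a set of `k·ℓ` distinct reals (`k ≥ 11`, `ℓ ≥ 1`) split into `k`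
consecutive blocks `B 0, …, B (k-1)` of `ℓ` elements each in increasing order.
Let `A` be a nonempty multiset of elements of `D` and `1 ≤ t ≤ |A|`.  If fewer
than `t` elements of `A` lie in the first block and at least `t` elements of
`A` lie in the first `11` blocks, then the `t`-th smallest element `r` of `A`
(characterized by `r ∈ A`, at least `t` elements of `A` being `≤ r`, and fewer
than `t` elements of `A` being `< r`) satisfies
`ℓ ≤ |{x ∈ D : x ≤ r}| ≤ 11·ℓ`. -/
theorem rank_t_sample_prunes (k ℓ : ℕ) (hk : 11 ≤ k) (hℓ : 1 ≤ ℓ)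
    (D : Finset ℝ) (hD : D.card = k * ℓ)
    (B : ℕ → Finset ℝ)
    (hBcard : ∀ i < k, (B i).card = ℓ)
    (hBunion : D = (Finset.range k).biUnion B)
    (hBorder : ∀ i < k, ∀ j < k, i < j → ∀ x ∈ B i, ∀ y ∈ B j, x < y)
    (A : Multiset ℝ) (hA : A ≠ 0) (hAD : ∀ x ∈ A, x ∈ D)
    (t : ℕ) (ht1 : 1 ≤ t) (htA : t ≤ Multiset.card A)
    (hfirst : Multiset.card (A.filter (fun x => x ∈ B 0)) < t)
    (heleven :
      t ≤ Multiset.card (A.filter (fun x => x ∈ (Finset.range 11).biUnion B)))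
    (r : ℝ) (hrA : r ∈ A)
    (hr_le : t ≤ Multiset.card (A.filter (fun x => x ≤ r)))
    (hr_lt : Multiset.card (A.filter (fun x => x < r)) < t) :
    ℓ ≤ (D.filter (fun x => x ≤ r)).card ∧
      (D.filter (fun x => x ≤ r)).card ≤ 11 * ℓ := by
  subst hBunion
  have hcard : ∑ i ∈ range 11, #(B i) = 11 * ℓ := by
    rw [sum_const_nat fun i hi => hBcard i ((mem_range.1 hi).trans_le hk), card_range]
  simpa [hcard, hBcard 0 (by lia)] using
    rank_t_sample_prunes_general (a := 1) (by lia) hk hBorder hAD (by simpa using hfirst)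
      heleven hr_le hr_lt
end

section
/- Let M be a pseudometric space, q ∈ M, and let D_1, …, D_k be pairwise disjoint finite subsets of M whose union D has at least ℓ elements, for a natural number ℓ ≥ 1. For each i, let S_i ⊆ D_i be a subset with |S_i| = min(ℓ, |D_i|) such that dist(s, q) ≤ dist(y, q) for every s ∈ S_i and every y ∈ D_i \ S_i. Then there exists a subset T of S_1 ∪ … ∪ S_k with |T| = ℓ such that dist(t, q) ≤ dist(y, q) for every t ∈ T and every y ∈ D \ T; i.e., a set of ℓ nearest neighbors of q in D can be found inside the union of the locally retained points. -/
/-!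
Let `T` consist of `ℓ` points nearest to the query among the retained ones. A point `y` that is
not retained was discarded by a machine `i` that kept at least `ℓ` points, all of them at least as
close as `y`. Since `|T| ≤ |S i|`, either `T = S i` or some point of `S i` lies outside `T`;
in both cases every `t ∈ T` is at least as close as some point of `S i`, hence as `y`.
-/

section Nearest

variable {α β : Type*}

/-- `T` is a set of nearest points of `A` for the cost `f`, the abstract form of the distance to a
query: no point of `A` outside `T` costs less than a point of `T`. Distinct points may have
equal cost, so `T` need not be determined by its cardinality. -/
structure IsNearestSubset [LE β] (f : α → β) (T A : Finset α) : Prop where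
  subset : T ⊆ A
  le_of_notMem : ∀ t ∈ T, ∀ y ∈ A, y ∉ T → f t ≤ f y

theorem exists_isNearestSubset_card_eq [LinearOrder β] (f : α → β) {A : Finset α} {n : ℕ}
    (hn : n ≤ A.card) : ∃ T, IsNearestSubset f T A ∧ T.card = n := by
  classical
  induction n with
  | zero => exact ⟨∅, ⟨A.empty_subset, by simp⟩, Finset.card_empty⟩
  | succ n ih =>
    obtain ⟨T, hT, rfl⟩ := ih (Nat.le_of_succ_le hn)
    have hne : (A \ T).Nonempty := Finset.sdiff_nonempty_of_card_lt_card hn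
    obtain ⟨x, hx, hmin⟩ := Finset.exists_min_image (A \ T) f hne
    obtain ⟨hxA, hxT⟩ := Finset.mem_sdiff.1 hx
    refine ⟨insert x T, ⟨Finset.insert_subset hxA hT.subset, fun t ht y hyA hy => ?_⟩,
      Finset.card_insert_of_notMem hxT⟩
    have hyT : y ∉ T := fun h => hy (Finset.mem_insert_of_mem h)
    rcases Finset.mem_insert.1 ht with rfl | htT
    · exact hmin y (Finset.mem_sdiff.2 ⟨hyA, hyT⟩)
    · exact hT.le_of_notMem t htT y hyA hyT

theorem IsNearestSubset.exists_le_of_card_le [Preorder β] {f : α → β} {T A B : Finset α}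
    (hT : IsNearestSubset f T A) (hBA : B ⊆ A) (hcard : T.card ≤ B.card) {t : α} (ht : t ∈ T) :
    ∃ b ∈ B, f t ≤ f b := by
  by_cases hBT : B ⊆ T
  · have hB : B = T := Finset.eq_of_subset_of_card_le hBT hcard
    exact ⟨t, hB ▸ ht, le_rfl⟩
  · obtain ⟨b, hbB, hbT⟩ := Finset.not_subset.1 hBT
    exact ⟨b, hbB, hT.le_of_notMem t ht b (hBA hbB) hbT⟩

theorem eq_or_le_card_of_min_card_le {S A : Finset α} {n : ℕ} (hS : S ⊆ A)
    (hcard : min n A.card ≤ S.card) : S = A ∨ n ≤ S.card :=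
  (min_le_iff.1 hcard).symm.imp_left (Finset.eq_of_subset_of_card_le hS)

variable {ι : Type*} [DecidableEq α] {I : Finset ι} {D S : ι → Finset α} {n : ℕ}

theorem le_card_biUnion_of_min_card_le (hD : n ≤ (I.biUnion D).card)
    (hS : ∀ i ∈ I, S i ⊆ D i) (hcard : ∀ i ∈ I, min n (D i).card ≤ (S i).card) :
    n ≤ (I.biUnion S).card := by
  by_cases hlarge : ∃ i ∈ I, n ≤ (S i).card
  · obtain ⟨i, hi, hn⟩ := hlarge
    exact hn.trans (Finset.card_le_card (Finset.subset_biUnion_of_mem S hi))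
  · push Not at hlarge
    have hSD : I.biUnion S = I.biUnion D := Finset.biUnion_congr rfl fun i hi =>
      (eq_or_le_card_of_min_card_le (hS i hi) (hcard i hi)).resolve_right (hlarge i hi).not_ge
    rwa [hSD]

theorem IsNearestSubset.of_biUnion [Preorder β] {f : α → β} {T : Finset α}
    (hT : IsNearestSubset f T (I.biUnion S)) (hS : ∀ i ∈ I, IsNearestSubset f (S i) (D i))
    (hcard : ∀ i ∈ I, min T.card (D i).card ≤ (S i).card) :
    IsNearestSubset f T (I.biUnion D) := by
  refine ⟨hT.subset.trans (Finset.biUnion_mono fun i hi => (hS i hi).subset),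
    fun t ht y hyD hyT => ?_⟩
  obtain ⟨i, hi, hyi⟩ := Finset.mem_biUnion.1 hyD
  have hSi : S i ⊆ I.biUnion S := Finset.subset_biUnion_of_mem S hi
  by_cases hyS : y ∈ S i
  · exact hT.le_of_notMem t ht y (hSi hyS) hyT
  · have hTS : T.card ≤ (S i).card :=
      (eq_or_le_card_of_min_card_le (hS i hi).subset (hcard i hi)).resolve_left
        fun h => hyS (h ▸ hyi)
    obtain ⟨s, hs, hts⟩ := hT.exists_le_of_card_le hSi hTS ht
    exact hts.trans ((hS i hi).le_of_notMem s hs y hyi hyS)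

theorem local_pruning_keeps_nearest_neighbors_general [LinearOrder β] (f : α → β)
    (hD : n ≤ (I.biUnion D).card) (hS : ∀ i ∈ I, IsNearestSubset f (S i) (D i))
    (hcard : ∀ i ∈ I, min n (D i).card ≤ (S i).card) :
    ∃ T ⊆ I.biUnion S, T.card = n ∧ IsNearestSubset f T (I.biUnion D) := by
  obtain ⟨T, hT, rfl⟩ := exists_isNearestSubset_card_eq f
    (le_card_biUnion_of_min_card_le hD (fun i hi => (hS i hi).subset) hcard)
  exact ⟨T, hT.subset, rfl, hT.of_biUnion hS hcard⟩

end Nearest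

/-- **Local pruning retains a set of `ℓ` nearest neighbors.**
Let `M` be a pseudometric space, `q ∈ M`, and `Dpart 0, …, Dpart (k-1)`
pairwise disjoint finite subsets of `M` whose union `D` has at least `ℓ ≥ 1`
elements.  If each machine `i` keeps a subset `S i ⊆ Dpart i` of size
`min (ℓ, |Dpart i|)` consisting of points closest to `q` (i.e. every kept
point is at distance at most that of every discarded point of `Dpart i`),
then there is a set `T` of `ℓ` points inside `S 0 ∪ ⋯ ∪ S (k-1)` such that
every point of `T` is at distance from `q` at most that of every point of
`D \ T`; i.e. `T` is a set of `ℓ` nearest neighbors of `q` in `D`. -/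
theorem local_pruning_keeps_nearest_neighbors
    {M : Type*} [PseudoMetricSpace M] [DecidableEq M] (q : M)
    (k ℓ : ℕ) (hℓ : 1 ≤ ℓ)
    (Dpart : Fin k → Finset M)
    (hdisj : ∀ i j : Fin k, i ≠ j → Disjoint (Dpart i) (Dpart j))
    (hbig : ℓ ≤ (Finset.univ.biUnion Dpart).card)
    (S : Fin k → Finset M)
    (hsub : ∀ i, S i ⊆ Dpart i)
    (hcard : ∀ i, (S i).card = min ℓ (Dpart i).card)
    (hclose : ∀ i, ∀ s ∈ S i, ∀ y ∈ Dpart i \ S i, dist s q ≤ dist y q) :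
    ∃ T : Finset M, T ⊆ Finset.univ.biUnion S ∧ T.card = ℓ ∧
      ∀ t ∈ T, ∀ y ∈ Finset.univ.biUnion Dpart \ T, dist t q ≤ dist y q := by
  obtain ⟨T, hTS, hTcard, hT⟩ := local_pruning_keeps_nearest_neighbors_general (dist · q) hbig
    (fun i _ => ⟨hsub i, by simpa using hclose i⟩) (fun i _ => (hcard i).ge)
  exact ⟨T, hTS, hTcard, by simpa using hT.le_of_notMem⟩
end

section
/- Let S be a finite set of distinct elements of a linear order, let p ∈ S, and let ℓ ≥ 1 be a natural number with ℓ < |{x ∈ S : x ≤ p}|. Then a subset T ⊆ S is the set of ℓ smallest elements of S if and only if T is the set of ℓ smallest elements of {x ∈ S : x ≤ p}. -/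
/-- `T` is the set of `ℓ` smallest elements of the finite set `S`:
`T ⊆ S`, `|T| = ℓ`, and every element of `T` is at most every element of
`S \ T`. -/
def IsSmallestL {α : Type*} [LinearOrder α] (ℓ : ℕ) (S T : Finset α) : Prop :=
  T ⊆ S ∧ T.card = ℓ ∧ ∀ x ∈ T, ∀ y ∈ S \ T, x ≤ y

namespace IsSmallestL

variable {α : Type*} [LinearOrder α] {k ℓ : ℕ} {S A T : Finset α}

theorem subset_of_le (hT : IsSmallestL ℓ S T) (hA : IsSmallestL k S A) (hℓk : ℓ ≤ k) :
    T ⊆ A := by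
  obtain ⟨hTS, rfl, hT_le⟩ := hT
  obtain ⟨hAS, rfl, hA_le⟩ := hA
  intro x hxT
  by_contra hxA
  have hA_not_subset : ¬A ⊆ T := fun hAT =>
    hxA (Finset.eq_of_subset_of_card_le hAT hℓk ▸ hxT)
  obtain ⟨z, hzA, hzT⟩ := Finset.not_subset.mp hA_not_subset
  have hxz : x ≤ z := hT_le x hxT z (Finset.mem_sdiff.mpr ⟨hAS hzA, hzT⟩)
  have hzx : z ≤ x := hA_le z hzA x (Finset.mem_sdiff.mpr ⟨hTS hxT, hxA⟩)
  exact hxA (hxz.antisymm hzx ▸ hzA)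

theorem of_subset (hT : IsSmallestL ℓ S T) (hTA : T ⊆ A) (hAS : A ⊆ S) : IsSmallestL ℓ A T :=
  ⟨hTA, hT.2.1, fun x hx y hy => hT.2.2 x hx y (Finset.sdiff_subset_sdiff hAS subset_rfl hy)⟩

theorem trans (hT : IsSmallestL ℓ A T) (hA : IsSmallestL k S A) : IsSmallestL ℓ S T := by
  obtain ⟨hTA, hcard, hT_le⟩ := hT
  obtain ⟨hAS, -, hA_le⟩ := hA
  refine ⟨hTA.trans hAS, hcard, fun x hxT y hy => ?_⟩
  obtain ⟨hyS, hyT⟩ := Finset.mem_sdiff.mp hy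
  by_cases hyA : y ∈ A
  · exact hT_le x hxT y (Finset.mem_sdiff.mpr ⟨hyA, hyT⟩)
  · exact hA_le x (hTA hxT) y (Finset.mem_sdiff.mpr ⟨hyS, hyA⟩)

end IsSmallestL

theorem isSmallestL_filter_le {α : Type*} [LinearOrder α] (S : Finset α) (p : α) :
    IsSmallestL (S.filter (fun x => x ≤ p)).card S (S.filter (fun x => x ≤ p)) := by
  refine ⟨Finset.filter_subset _ S, rfl, fun x hx y hy => ?_⟩
  obtain ⟨hyS, hy_notMem⟩ := Finset.mem_sdiff.mp hy
  have hxp : x ≤ p := (Finset.mem_filter.mp hx).2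
  have hpy : p < y := not_le.mp fun hyp => hy_notMem (Finset.mem_filter.mpr ⟨hyS, hyp⟩)
  exact hxp.trans hpy.le

-- The points surviving a pivot `p` are themselves the `s` smallest elements of `S`, so the recursion
-- on `max := p` is the case `A = {x ∈ S : x ≤ p}`, `k = s`.
theorem selection_recursion_max_general {α : Type*} [LinearOrder α] {k ℓ : ℕ} {S A : Finset α}
    (hA : IsSmallestL k S A) (hℓk : ℓ ≤ k) (T : Finset α) :
    IsSmallestL ℓ S T ↔ IsSmallestL ℓ A T :=
  ⟨fun hT => hT.of_subset (hT.subset_of_le hA hℓk) hA.1, fun hT => hT.trans hA⟩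

/-- **Recursion correctness of the selection algorithm, case `s > ℓ`.**
Let `S` be a finite set of distinct elements of a linear order, `p ∈ S`, and
`ℓ ≥ 1` with `ℓ < |{x ∈ S : x ≤ p}|`.  Then a subset `T` is the set of `ℓ`
smallest elements of `S` if and only if `T` is the set of `ℓ` smallest
elements of `{x ∈ S : x ≤ p}`. -/
theorem selection_recursion_max {α : Type*} [LinearOrder α]
    (S : Finset α) (p : α) (hp : p ∈ S)
    (ℓ : ℕ) (hℓ : 1 ≤ ℓ) (hlt : ℓ < (S.filter (fun x => x ≤ p)).card) :
    ∀ T : Finset α,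
      IsSmallestL ℓ S T ↔ IsSmallestL ℓ (S.filter (fun x => x ≤ p)) T :=
  selection_recursion_max_general (isSmallestL_filter_le S p) hlt.le
end

section
/- Let S be a finite set of distinct elements of a linear order, let p ∈ S, let s = |{x ∈ S : x ≤ p}|, and let ℓ be a natural number with s < ℓ ≤ |S|. Then the set of ℓ smallest elements of S equals {x ∈ S : x ≤ p} ∪ T', where T' is the set of (ℓ − s) smallest elements of {x ∈ S : x > p}. -/
namespace IsSmallestL

variable {α : Type*} [LinearOrder α] {k m : ℕ} {S T U : Finset α}

theorem subset_of_le_s12 (hT : IsSmallestL k S T) (hU : IsSmallestL m S U) (hkm : k ≤ m) :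
    T ⊆ U := by
  obtain ⟨hTS, hTcard, hTle⟩ := hT
  obtain ⟨hUS, hUcard, hUle⟩ := hU
  intro x hxT
  by_contra hxU
  have hUT : U ⊆ T := by
    intro y hyU
    by_contra hyT
    have hxy : x ≤ y := hTle x hxT y (Finset.mem_sdiff.2 ⟨hUS hyU, hyT⟩)
    have hyx : y ≤ x := hUle y hyU x (Finset.mem_sdiff.2 ⟨hTS hxT, hxU⟩)
    exact hxU (hyx.antisymm hxy ▸ hyU)
  have hcard : T.card ≤ U.card := by rwa [hTcard, hUcard]
  exact hxU (Finset.eq_of_subset_of_card_le hUT hcard ▸ hxT)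

theorem unique (hT : IsSmallestL k S T) (hU : IsSmallestL k S U) : T = U :=
  (hT.subset_of_le_s12 hU le_rfl).antisymm (hU.subset_of_le_s12 hT le_rfl)

theorem union (hT : IsSmallestL k S T) (hU : IsSmallestL m (S \ T) U) :
    IsSmallestL (k + m) S (T ∪ U) := by
  obtain ⟨hTS, hTcard, hTle⟩ := hT
  obtain ⟨hUS, hUcard, hUle⟩ := hU
  refine ⟨Finset.union_subset hTS (hUS.trans Finset.sdiff_subset), ?_, ?_⟩
  · rw [Finset.card_union_of_disjoint (Finset.disjoint_sdiff.mono_right hUS), hTcard, hUcard]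
  · intro x hx y hy
    rcases Finset.mem_union.1 hx with hxT | hxU
    · exact hTle x hxT y (Finset.sdiff_subset_sdiff subset_rfl Finset.subset_union_left hy)
    · exact hUle x hxU y (by rwa [sdiff_sdiff_left])

theorem filter_le (S : Finset α) (p : α) :
    IsSmallestL (S.filter (fun x => x ≤ p)).card S (S.filter (fun x => x ≤ p)) := by
  refine ⟨Finset.filter_subset _ _, rfl, fun x hx y hy => ?_⟩
  have hxp : x ≤ p := (Finset.mem_filter.1 hx).2
  have hpy : p < y := by
    rw [← Finset.filter_not] at hy
    exact not_le.1 (Finset.mem_filter.1 hy).2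
  exact hxp.trans hpy.le

end IsSmallestL

theorem selection_recursion_min_general {α : Type*} [LinearOrder α] {S T' : Finset α} {p : α}
    {m : ℕ} (hT' : IsSmallestL m (S.filter (fun x => p < x)) T') (T : Finset α) :
    IsSmallestL ((S.filter (fun x => x ≤ p)).card + m) S T ↔
      T = S.filter (fun x => x ≤ p) ∪ T' := by
  have hcompl : S.filter (fun x => p < x) = S \ S.filter (fun x => x ≤ p) := by
    simp only [← Finset.filter_not, not_le]
  have hunion : IsSmallestL ((S.filter (fun x => x ≤ p)).card + m) S
      (S.filter (fun x => x ≤ p) ∪ T') :=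
    (IsSmallestL.filter_le S p).union (hcompl ▸ hT')
  exact ⟨fun hT => hT.unique hunion, fun hT => hT ▸ hunion⟩

/-- **Recursion correctness of the selection algorithm, case `s < ℓ`.**
Let `S` be a finite set of distinct elements of a linear order, `p ∈ S`,
`s = |{x ∈ S : x ≤ p}|`, and `s < ℓ ≤ |S|`.  Then the set of `ℓ` smallest
elements of `S` equals `{x ∈ S : x ≤ p} ∪ T'`, where `T'` is the set of
`ℓ − s` smallest elements of `{x ∈ S : x > p}`:  the union is a set of `ℓ`
smallest elements of `S`, and any set of `ℓ` smallest elements of `S` equals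
that union. -/
theorem selection_recursion_min {α : Type*} [LinearOrder α]
    (S : Finset α) (p : α) (hp : p ∈ S)
    (s ℓ : ℕ) (hs : s = (S.filter (fun x => x ≤ p)).card)
    (hsl : s < ℓ) (hℓS : ℓ ≤ S.card) :
    ∀ T' : Finset α,
      IsSmallestL (ℓ - s) (S.filter (fun x => p < x)) T' →
        IsSmallestL ℓ S (S.filter (fun x => x ≤ p) ∪ T') ∧
        ∀ T : Finset α, IsSmallestL ℓ S T →
          T = S.filter (fun x => x ≤ p) ∪ T' := by
  intro T' hT'
  have h := selection_recursion_min_general hT'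
  rw [← hs, Nat.add_sub_of_le hsl.le] at h
  exact ⟨(h _).2 rfl, fun T => (h T).1⟩
end
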